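/- Let A be a finite (0,1)-matrix. Then A is nested if and only if A contains no 0-gem as a subconfiguration. (Equivalently: if every two rows of A are disjoint or nested, then there exists a permutation of the columns of A after which the 1's in every row appear consecutively, and conversely a nested matrix has no two rows that overlap.) -/

import Mathlib

/-- A (0,1)-matrix (with Boolean entries) has the consecutive-ones property for the rows
if there is a permutation of its columns after which the 1's in each row appear
consecutively. -/
def HasC1P {m n : ℕ} (A : Fin m → Fin n → Bool) : Prop :=
  ∃ σ : Equiv.Perm (Fin n), ∀ (i : Fin m) (j₁ j₂ j₃ : Fin n),
    j₁ ≤ j₂ → j₂ ≤ j₃ → A i (σ j₁) = true → A i (σ j₃) = true → A i (σ j₂) = true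

/-- A (0,1)-matrix is nested if it has a consecutive-ones ordering for the rows and
every two rows are disjoint or nested. -/
def IsNestedMatrix {m n : ℕ} (A : Fin m → Fin n → Bool) : Prop :=
  HasC1P A ∧ ∀ i₁ i₂ : Fin m,
    (∀ j : Fin n, ¬(A i₁ j = true ∧ A i₂ j = true)) ∨
    (∀ j : Fin n, A i₁ j = true → A i₂ j = true) ∨
    (∀ j : Fin n, A i₂ j = true → A i₁ j = true)

/-- `A` contains the 0-gem (the 2×3 matrix with rows (1,1,0) and (0,1,1)) as a
subconfiguration: some permutation of the rows and columns of the 0-gem is a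
submatrix of `A`. -/
def ContainsZeroGem {m n : ℕ} (A : Fin m → Fin n → Bool) : Prop :=
  ∃ (i₁ i₂ : Fin m) (j₁ j₂ j₃ : Fin n),
    i₁ ≠ i₂ ∧ j₁ ≠ j₂ ∧ j₁ ≠ j₃ ∧ j₂ ≠ j₃ ∧
    A i₁ j₁ = true ∧ A i₁ j₂ = true ∧ A i₁ j₃ = false ∧
    A i₂ j₁ = false ∧ A i₂ j₂ = true ∧ A i₂ j₃ = true

theorem lex_aux {m : ℕ} (a b : Fin m → Bool) (h : toLex a ≤ toLex b) (p : Fin m)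
    (hp : ∀ q, q < p → a q = b q) : a p ≤ b p := by
  rcases h.eq_or_lt with h | h
  · have : a = b := toLex.injective h
    rw [this]
  · obtain ⟨i, h1, h2⟩ := h
    rcases lt_trichotomy i p with h3 | h3 | h3
    · have h4 := hp i h3
      have h2' : a i < b i := h2
      rw [h4] at h2'
      exact absurd h2' (lt_irrefl _)
    · subst h3
      exact le_of_lt h2
    · exact le_of_eq (h1 p h3)

theorem lex_sandwich {m : ℕ} (a b c : Fin m → Bool) (h : toLex a ≤ toLex b)
    (h' : toLex b ≤ toLex c) (k : Fin m) (hk : ∀ q, q ≤ k → a q = c q) :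
    ∀ p, p ≤ k → a p = b p := by
  intro p
  induction p using WellFoundedLT.induction with
  | ind p ih =>
    intro hp
    have h1 := lex_aux a b h p (fun q hq => ih q hq (hq.le.trans hp))
    have h2 := lex_aux b c h' p (fun q hq => by
      rw [← ih q hq (hq.le.trans hp), hk q (hq.le.trans hp)])
    rw [← hk p hp] at h2
    exact le_antisymm h1 h2

theorem c1p_of_laminar {m n : ℕ} (A : Fin m → Fin n → Bool)
    (hA : ∀ i₁ i₂ : Fin m,
    (∀ j : Fin n, ¬(A i₁ j = true ∧ A i₂ j = true)) ∨
    (∀ j : Fin n, A i₁ j = true → A i₂ j = true) ∨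
    (∀ j : Fin n, A i₂ j = true → A i₁ j = true)) : HasC1P A := by
  let R : Fin m → Finset (Fin n) := fun i => Finset.univ.filter (fun j => A i j = true)
  let g : Fin m → ℤ := fun i => -((R i).card : ℤ)
  let τ := Tuple.sort g
  have hτ : Monotone (g ∘ τ) := Tuple.monotone_sort g
  let f : Fin n → Lex (Fin m → Bool) := fun j => toLex (fun k => A (τ k) j)
  have hf : Monotone (f ∘ Tuple.sort f) := Tuple.monotone_sort f
  refine ⟨Tuple.sort f, ?_⟩
  intro i j₁ j₂ j₃ h12 h23 h1 h3
  generalize hx : Tuple.sort f j₁ = x at *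
  generalize hy : Tuple.sort f j₂ = y at *
  generalize hz : Tuple.sort f j₃ = z at *
  have hxy : f x ≤ f y := by rw [← hx, ← hy]; exact hf h12
  have hyz : f y ≤ f z := by rw [← hy, ← hz]; exact hf h23
  obtain ⟨k, rfl⟩ := τ.surjective i
  have key := lex_sandwich _ _ _ hxy hyz k (by
    intro q hq
    have hc : (R (τ k)).card ≤ (R (τ q)).card := by
      have := hτ hq
      simp only [g, Function.comp] at this
      omega
    show A (τ q) x = A (τ q) z
    rcases hA (τ q) (τ k) with h | h | h
    · have a1 := h x
      have a3 := h z
      simp_all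
    · have hs : R (τ q) ⊆ R (τ k) := by
        intro j hj
        simp only [R, Finset.mem_filter, Finset.mem_univ, true_and] at hj ⊢
        exact h j hj
      have he := Finset.eq_of_subset_of_card_le hs hc
      have hm : ∀ j, A (τ k) j = true → A (τ q) j = true := by
        intro j hj
        have : j ∈ R (τ q) := by rw [he]; simpa [R] using hj
        simpa [R] using this
      rw [hm x h1, hm z h3]
    · rw [h x h1, h z h3]) k le_rfl
  have key' : A (τ k) x = A (τ k) y := key
  rw [← key', h1]

/-- A (0,1)-matrix is nested if and only if it contains no 0-gem as a subconfiguration. -/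
theorem nested_iff_no_zero_gem {m n : ℕ} (A : Fin m → Fin n → Bool) :
    IsNestedMatrix A ↔ ¬ ContainsZeroGem A := by
  constructor
  · rintro ⟨-, h⟩ ⟨i₁, i₂, j₁, j₂, j₃, -, -, -, -, a1, a2, a3, b1, b2, b3⟩
    rcases h i₁ i₂ with h | h | h
    · exact h j₂ ⟨a2, b2⟩
    · have := h j₁ a1
      simp_all
    · have := h j₃ b3
      simp_all
  · intro h
    have hA : ∀ i₁ i₂ : Fin m,
      (∀ j : Fin n, ¬(A i₁ j = true ∧ A i₂ j = true)) ∨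
      (∀ j : Fin n, A i₁ j = true → A i₂ j = true) ∨
      (∀ j : Fin n, A i₂ j = true → A i₁ j = true) := by
      intro i₁ i₂
      by_contra! hc
      obtain ⟨⟨j₂, a2, b2⟩, ⟨j₁, a1, b1⟩, ⟨j₃, b3, a3⟩⟩ := hc
      refine h ⟨i₁, i₂, j₁, j₂, j₃, ?_, ?_, ?_, ?_, a1, a2, by simpa using a3,
        by simpa using b1, b2, b3⟩
      · rintro rfl; exact b1 a1
      · rintro rfl; exact b1 b2
      · rintro rfl; exact b1 b3
      · rintro rfl; exact a3 a2
    exact ⟨c1p_of_laminar A hA, hA⟩
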